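/- The infinite series identity 91√3/16 = Σ_{k=0}^{∞} (1/4)^k · [(1/2)_k (4/3)_k (5/3)_k] / [(1)_k (19/12)_k (25/12)_k] · (9k + 8) holds, where the sum is over natural numbers k and all quantities are real numbers. -/

import Mathlib

noncomputable def risingFactorial (a : ℝ) (k : ℕ) : ℝ := ∏ i ∈ Finset.range k, (a + i)

/-!
For `a, b > 0`, the series `∑ₖ hypTerm a b k` has the value
`2 ^ a Γ(b + (a+1)/2) Γ(b + a/2 + 1) / (Γ(a + b + 1) Γ(b + 1/2))`, and the theorem is the case
`a = 1/2`, `b = 5/6`. The sums at `b` and `b + 1` are proportional, because the difference of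
suitably scaled terms telescopes. Iterating turns the sum at `b` into a quotient of rising
factorials, which tends to the quotient of Gamma values, times the sum at `b + n`; as `n → ∞` the
latter tends to the binomial series `∑ₖ (a)ₖ / k! * 2⁻ᵏ = 2 ^ a`.
-/

open Filter Topology

section RisingFactorial

theorem risingFactorial_zero (a : ℝ) : risingFactorial a 0 = 1 := by
  simp [risingFactorial]

theorem risingFactorial_succ (a : ℝ) (k : ℕ) :
    risingFactorial a (k + 1) = risingFactorial a k * (a + k) := by
  simp [risingFactorial, Finset.prod_range_succ]

theorem risingFactorial_pos {a : ℝ} (ha : 0 < a) (k : ℕ) : 0 < risingFactorial a k :=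
  Finset.prod_pos fun _ _ => by positivity

theorem mul_risingFactorial_add_one (a : ℝ) (k : ℕ) :
    a * risingFactorial (a + 1) k = risingFactorial a k * (a + k) := by
  induction k with
  | zero => simp [risingFactorial_zero]
  | succ k ih =>
    rw [risingFactorial_succ, risingFactorial_succ, ← mul_assoc, ih]
    push_cast
    ring

theorem risingFactorial_add_one {a : ℝ} (ha : a ≠ 0) (k : ℕ) :
    risingFactorial (a + 1) k = risingFactorial a k * (a + k) / a := by
  rw [eq_div_iff ha, mul_comm, mul_risingFactorial_add_one]

theorem risingFactorial_eq_ascPochhammer_eval (a : ℝ) (k : ℕ) :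
    risingFactorial a k = (ascPochhammer ℝ k).eval a := by
  induction k with
  | zero => simp [risingFactorial_zero]
  | succ k ih => rw [risingFactorial_succ, ih, ascPochhammer_succ_eval]

theorem risingFactorial_one (k : ℕ) : risingFactorial 1 k = k.factorial := by
  rw [risingFactorial_eq_ascPochhammer_eval, ascPochhammer_eval_one]

theorem ring_multichoose_eq_risingFactorial_div (a : ℝ) (k : ℕ) :
    Ring.multichoose a k = risingFactorial a k / risingFactorial 1 k := by
  rw [risingFactorial_one, eq_div_iff (by positivity), risingFactorial_eq_ascPochhammer_eval,
    ← Polynomial.ascPochhammer_smeval_eq_eval, ← Ring.factorial_nsmul_multichoose_eq_ascPochhammer,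
    nsmul_eq_mul, mul_comm]

theorem hasSum_risingFactorial_mul_pow (a : ℝ) {x : ℝ} (hx : |x| < 1) :
    HasSum (fun k => risingFactorial a k / risingFactorial 1 k * x ^ k) (1 / (1 - x) ^ a) := by
  have h := (Real.one_div_one_sub_rpow_hasFPowerSeriesOnBall_zero a).hasSum (y := x)
    (by simpa [enorm_eq_nnnorm, ← NNReal.coe_lt_coe] using hx)
  simpa [← Ring.multichoose_eq, ring_multichoose_eq_risingFactorial_div, mul_comm] using h

theorem summable_risingFactorial_mul_half_pow (a : ℝ) :
    Summable fun k => risingFactorial a k / risingFactorial 1 k * (1 / 2) ^ k :=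
  (hasSum_risingFactorial_mul_pow a (by norm_num [abs_of_pos])).summable

theorem tendsto_risingFactorial_div_pow (p q : ℝ) (k : ℕ) :
    Tendsto (fun x : ℝ => risingFactorial (p * x + q) k / x ^ k) atTop (𝓝 (p ^ k)) := by
  have hfactor (i : ℕ) : Tendsto (fun x : ℝ => (p * x + q + i) / x) atTop (𝓝 p) := by
    have h := (tendsto_inv_atTop_zero.const_mul (q + i)).const_add p
    rw [mul_zero, add_zero] at h
    refine h.congr' ?_
    filter_upwards [eventually_ne_atTop 0] with x hx
    field_simp
    ring
  simpa [risingFactorial, Finset.prod_div_distrib] using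
    tendsto_finsetProd (Finset.range k) fun i _ => hfactor i

theorem GammaSeq_eq_div_risingFactorial (x : ℝ) (n : ℕ) :
    Real.GammaSeq x n = (n : ℝ) ^ x * n.factorial / risingFactorial x (n + 1) :=
  rfl

/-- The balancing condition `x + y = z + w` makes the powers of `n` cancel. -/
theorem tendsto_risingFactorial_ratio {x y z w : ℝ} (hz : 0 < z) (hw : 0 < w)
    (h : x + y = z + w) :
    Tendsto (fun n => risingFactorial z n * risingFactorial w n /
        (risingFactorial x n * risingFactorial y n)) atTop
      (𝓝 (Real.Gamma x * Real.Gamma y / (Real.Gamma z * Real.Gamma w))) := by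
  have hΓ : Real.Gamma z * Real.Gamma w ≠ 0 :=
    (mul_pos (Real.Gamma_pos_of_pos hz) (Real.Gamma_pos_of_pos hw)).ne'
  have hlim := ((Real.GammaSeq_tendsto_Gamma x).mul (Real.GammaSeq_tendsto_Gamma y)).div
    ((Real.GammaSeq_tendsto_Gamma z).mul (Real.GammaSeq_tendsto_Gamma w)) hΓ
  refine (tendsto_add_atTop_iff_nat 1).mp (hlim.congr' ?_)
  filter_upwards [eventually_gt_atTop 0] with n hn
  have hn_pos : (0 : ℝ) < n := Nat.cast_pos.mpr hn
  have hpow : (n : ℝ) ^ x * n ^ y = n ^ z * n ^ w := by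
    rw [← Real.rpow_add hn_pos, h, Real.rpow_add hn_pos]
  simp only [Pi.div_apply, GammaSeq_eq_div_risingFactorial, div_mul_div_comm,
    mul_mul_mul_comm _ (n.factorial : ℝ), hpow]
  have : (n : ℝ) ^ z * n ^ w * (n.factorial * n.factorial) ≠ 0 := by positivity
  rw [div_div_div_cancel_left' _ _ this]

end RisingFactorial

section Series

/-- The `k`-th coefficient of a `₃F₂` series at `1 / 4`: the part of `hypTerm` without its factor
linear in `k`. -/
noncomputable def hypCoeff (a b : ℝ) (k : ℕ) : ℝ :=
  (1 / 4) ^ k * (risingFactorial a k * risingFactorial (a + b) k * risingFactorial (2 * b) k) /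
    (risingFactorial 1 k * risingFactorial (b + (a + 1) / 2) k * risingFactorial (b + a / 2 + 1) k)

/-- The `k`-th term of the two-parameter series to be summed, normalized to be `1` at `k = 0`, so
that its sum stays bounded as `b → ∞`. -/
noncomputable def hypTerm (a b : ℝ) (k : ℕ) : ℝ :=
  hypCoeff a b k * ((3 * k + 2 * (a + b)) / (2 * (a + b)))

variable {a b : ℝ}

theorem hypCoeff_pos (ha : 0 < a) (hb : 0 < b) (k : ℕ) : 0 < hypCoeff a b k := by
  have hab := risingFactorial_pos (a := a + b) (by positivity) k
  have h2b := risingFactorial_pos (a := 2 * b) (by positivity) k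
  have hu := risingFactorial_pos (a := b + (a + 1) / 2) (by positivity) k
  have hv := risingFactorial_pos (a := b + a / 2 + 1) (by positivity) k
  have hak := risingFactorial_pos ha k
  have h1 := risingFactorial_pos one_pos k
  unfold hypCoeff
  positivity

theorem hypTerm_pos (ha : 0 < a) (hb : 0 < b) (k : ℕ) : 0 < hypTerm a b k :=
  mul_pos (hypCoeff_pos ha hb k) (by positivity)

theorem hypCoeff_succ (a b : ℝ) (k : ℕ) :
    hypCoeff a b (k + 1) = hypCoeff a b k * (1 / 4 * ((a + k) * (a + b + k) * (2 * b + k)) /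
      ((1 + k) * (b + (a + 1) / 2 + k) * (b + a / 2 + 1 + k))) := by
  simp only [hypCoeff, risingFactorial_succ, pow_succ, div_mul_div_comm]
  congr 1 <;> ring

theorem hypCoeff_add_one (ha : 0 < a) (hb : 0 < b) (k : ℕ) :
    hypCoeff a (b + 1) k = hypCoeff a b k *
      ((a + b + k) * (2 * b + k) * (2 * b + 1 + k) * (b + (a + 1) / 2) * (b + a / 2 + 1) /
        ((a + b) * (2 * b) * (2 * b + 1) * (b + (a + 1) / 2 + k) * (b + a / 2 + 1 + k))) := by
  have hab : a + (b + 1) = a + b + 1 := by ring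
  have h2b : 2 * (b + 1) = 2 * b + 1 + 1 := by ring
  have hu : b + 1 + (a + 1) / 2 = b + (a + 1) / 2 + 1 := by ring
  have hv : b + 1 + a / 2 + 1 = b + a / 2 + 1 + 1 := by ring
  rw [hypCoeff, hypCoeff, hab, h2b, hu, hv, risingFactorial_add_one (a := a + b) (by positivity),
    risingFactorial_add_one (a := 2 * b + 1) (by positivity),
    risingFactorial_add_one (a := 2 * b) (by positivity),
    risingFactorial_add_one (a := b + (a + 1) / 2) (by positivity),
    risingFactorial_add_one (a := b + a / 2 + 1) (by positivity)]
  field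

theorem hypCoeff_le (ha : 0 < a) (hb : 0 < b) (k : ℕ) :
    hypCoeff a b k ≤ risingFactorial a k / risingFactorial 1 k * (1 / 2) ^ k := by
  induction k with
  | zero => simp [hypCoeff, risingFactorial_zero]
  | succ k ih =>
    have hk : (0 : ℝ) ≤ k := k.cast_nonneg
    have hfactors : (a + b + k) * (2 * b + k) ≤
        2 * ((b + (a + 1) / 2 + k) * (b + a / 2 + 1 + k)) := by
      nlinarith [mul_nonneg ha.le hk, mul_nonneg hb.le hk]
    have hratio : 1 / 4 * ((a + k) * (a + b + k) * (2 * b + k)) /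
        ((1 + k) * (b + (a + 1) / 2 + k) * (b + a / 2 + 1 + k)) ≤ (a + k) / (1 + k) * (1 / 2) := by
      rw [div_mul_div_comm, div_le_div_iff₀ (by positivity) (by positivity)]
      linear_combination (1 / 2) * (a + k) * (1 + k) * hfactors
    have hpos := risingFactorial_pos ha k
    have hpos_one := risingFactorial_pos one_pos k
    calc hypCoeff a b (k + 1)
        ≤ risingFactorial a k / risingFactorial 1 k * (1 / 2) ^ k *
            ((a + k) / (1 + k) * (1 / 2)) := by
          rw [hypCoeff_succ]
          exact mul_le_mul ih hratio (by positivity) (by positivity)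
      _ = risingFactorial a (k + 1) / risingFactorial 1 (k + 1) * (1 / 2) ^ (k + 1) := by
          simp only [risingFactorial_succ, pow_succ]
          field

theorem hypTerm_le (ha : 0 < a) (hb : 0 < b) (k : ℕ) :
    hypTerm a b k ≤ 3 / 2 * (risingFactorial (a + 1) k / risingFactorial 1 k * (1 / 2) ^ k) := by
  have h1 := risingFactorial_pos one_pos k
  have hk := risingFactorial_pos ha k
  have hweight : (3 * k + 2 * (a + b)) / (2 * (a + b)) ≤ 3 / 2 * ((a + k) / a) := by
    rw [mul_div_assoc', div_le_div_iff₀ (by positivity) ha]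
    nlinarith [mul_pos ha ha, mul_pos ha hb, mul_nonneg hb.le k.cast_nonneg (α := ℝ)]
  calc hypTerm a b k
      ≤ risingFactorial a k / risingFactorial 1 k * (1 / 2) ^ k * (3 / 2 * ((a + k) / a)) := by
        rw [hypTerm]
        gcongr
        exact hypCoeff_le ha hb k
    _ = 3 / 2 * (risingFactorial (a + 1) k / risingFactorial 1 k * (1 / 2) ^ k) := by
        rw [risingFactorial_add_one ha.ne']
        ring

theorem summable_hypTerm (ha : 0 < a) (hb : 0 < b) : Summable (hypTerm a b) :=
  .of_nonneg_of_le (fun k => (hypTerm_pos ha hb k).le) (hypTerm_le ha hb)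
    ((summable_risingFactorial_mul_half_pow (a + 1)).mul_left _)

/-- The quotient of the sums of `hypTerm a b` and `hypTerm a (b + 1)`. -/
noncomputable def hypRatio (a b : ℝ) : ℝ :=
  (a + b + 1) * (b + 1 / 2) / ((b + (a + 1) / 2) * (b + a / 2 + 1))

/-- The telescoping certificate: an antidifference in `k` of
`hypTerm a b k - hypRatio a b * hypTerm a (b + 1) k`. -/
noncomputable def hypCertificate (a b : ℝ) (k : ℕ) : ℝ :=
  k * (a + k) / (2 * b * (a + b)) * hypCoeff a b k

theorem hypTerm_sub_hypRatio_mul (ha : 0 < a) (hb : 0 < b) (k : ℕ) :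
    hypTerm a b k - hypRatio a b * hypTerm a (b + 1) k =
      hypCertificate a b (k + 1) - hypCertificate a b k := by
  rw [hypTerm, hypTerm, hypCertificate, hypCertificate, hypRatio, hypCoeff_add_one ha hb,
    hypCoeff_succ]
  push_cast
  field

theorem summable_hypCertificate (ha : 0 < a) (hb : 0 < b) : Summable (hypCertificate a b) := by
  refine .of_nonneg_of_le (fun k => ?_) (fun k => ?_)
    ((summable_risingFactorial_mul_half_pow (a + 1 + 1)).mul_left (a * (a + 1) / (2 * b * (a + b))))
  · have := hypCoeff_pos ha hb k
    unfold hypCertificate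
    positivity
  have h1 := risingFactorial_pos one_pos k
  have hk := risingFactorial_pos ha k
  calc hypCertificate a b k
      ≤ (a + 1 + k) * (a + k) / (2 * b * (a + b)) *
          (risingFactorial a k / risingFactorial 1 k * (1 / 2) ^ k) := by
        rw [hypCertificate]
        gcongr
        · exact (hypCoeff_pos ha hb k).le
        · linarith
        · exact hypCoeff_le ha hb k
    _ = a * (a + 1) / (2 * b * (a + b)) *
          (risingFactorial (a + 1 + 1) k / risingFactorial 1 k * (1 / 2) ^ k) := by
        rw [risingFactorial_add_one (by positivity), risingFactorial_add_one ha.ne']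
        field

theorem tsum_hypTerm_eq_hypRatio_mul (ha : 0 < a) (hb : 0 < b) :
    ∑' k, hypTerm a b k = hypRatio a b * ∑' k, hypTerm a (b + 1) k := by
  have hG := summable_hypCertificate ha hb
  have hG₀ : hypCertificate a b 0 = 0 := by simp [hypCertificate]
  have htel : ∑' k, (hypTerm a b k - hypRatio a b * hypTerm a (b + 1) k) = 0 := by
    simp only [hypTerm_sub_hypRatio_mul ha hb]
    rw [((summable_nat_add_iff 1).mpr hG).tsum_sub hG, hG.tsum_eq_zero_add, hG₀]
    ring
  rwa [(summable_hypTerm ha hb).tsum_sub ((summable_hypTerm ha (by positivity)).mul_left _),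
    tsum_mul_left, sub_eq_zero] at htel

theorem tsum_hypTerm_eq_mul_tsum_add (ha : 0 < a) (hb : 0 < b) (n : ℕ) :
    ∑' k, hypTerm a b k =
      risingFactorial (a + b + 1) n * risingFactorial (b + 1 / 2) n /
        (risingFactorial (b + (a + 1) / 2) n * risingFactorial (b + a / 2 + 1) n) *
      ∑' k, hypTerm a (b + n) k := by
  induction n with
  | zero => simp [risingFactorial_zero]
  | succ n ih =>
    rw [ih, tsum_hypTerm_eq_hypRatio_mul (b := b + n) ha (by positivity), hypRatio, ← mul_assoc,
      div_mul_div_comm, Nat.cast_succ, ← add_assoc b]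
    simp only [risingFactorial_succ]
    congr 1
    ring

theorem tendsto_hypCoeff_atTop (a : ℝ) (k : ℕ) :
    Tendsto (fun b => hypCoeff a b k) atTop
      (𝓝 (risingFactorial a k / risingFactorial 1 k * (1 / 2) ^ k)) := by
  have hnum := (tendsto_risingFactorial_div_pow 1 a k).mul (tendsto_risingFactorial_div_pow 2 0 k)
  have hden := (tendsto_risingFactorial_div_pow 1 ((a + 1) / 2) k).mul
    (tendsto_risingFactorial_div_pow 1 (a / 2 + 1) k)
  have h := (hnum.div hden (by simp)).const_mul
    (risingFactorial a k / risingFactorial 1 k * (1 / 4) ^ k)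
  have hval : risingFactorial a k / risingFactorial 1 k * (1 / 4) ^ k *
      (1 ^ k * 2 ^ k / (1 ^ k * 1 ^ k)) =
      risingFactorial a k / risingFactorial 1 k * (1 / 2) ^ k := by
    rw [one_pow, one_mul, one_mul, div_one, mul_assoc, ← mul_pow]
    norm_num
  rw [hval] at h
  refine h.congr' ?_
  filter_upwards [eventually_ne_atTop 0] with b hb
  have hbk : b ^ k * b ^ k ≠ 0 := by positivity
  simp only [Pi.div_apply, div_mul_div_comm _ (b ^ k), div_div_div_cancel_right₀ hbk, one_mul,
    add_zero, hypCoeff, add_comm b a, add_assoc]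
  ring

theorem tendsto_hypTerm_atTop (a : ℝ) (k : ℕ) :
    Tendsto (fun b => hypTerm a b k) atTop
      (𝓝 (risingFactorial a k / risingFactorial 1 k * (1 / 2) ^ k)) := by
  have hweight : Tendsto (fun b : ℝ => 3 * k / 2 * (a + b)⁻¹ + 1) atTop (𝓝 1) := by
    have h := (tendsto_atTop_add_const_left atTop a tendsto_id).inv_tendsto_atTop
    simpa using (h.const_mul (3 * k / 2 : ℝ)).add_const 1
  have h := (tendsto_hypCoeff_atTop a k).mul hweight
  rw [mul_one] at h
  refine h.congr' ?_
  filter_upwards [eventually_gt_atTop (-a)] with b hb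
  have hab : a + b ≠ 0 := by linarith
  rw [hypTerm]
  field

theorem tendsto_tsum_hypTerm_atTop (ha : 0 < a) :
    Tendsto (fun b => ∑' k, hypTerm a b k) atTop (𝓝 (2 ^ a)) := by
  have hbinom := (hasSum_risingFactorial_mul_pow a (x := 1 / 2) (by norm_num [abs_of_pos])).tsum_eq
  have hval : 1 / (1 - 1 / 2 : ℝ) ^ a = 2 ^ a := by
    rw [one_div, ← Real.inv_rpow (by norm_num)]
    norm_num
  rw [← hval, ← hbinom]
  refine tendsto_tsum_of_dominated_convergence
    ((summable_risingFactorial_mul_half_pow (a + 1)).mul_left (3 / 2))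
    (tendsto_hypTerm_atTop a) ?_
  filter_upwards [eventually_gt_atTop 0] with b hb k
  rw [Real.norm_of_nonneg (hypTerm_pos ha hb k).le]
  exact hypTerm_le ha hb k

theorem hasSum_hypTerm (ha : 0 < a) (hb : 0 < b) :
    HasSum (hypTerm a b)
      (2 ^ a * (Real.Gamma (b + (a + 1) / 2) * Real.Gamma (b + a / 2 + 1) /
        (Real.Gamma (a + b + 1) * Real.Gamma (b + 1 / 2)))) := by
  have hratio := tendsto_risingFactorial_ratio (x := b + (a + 1) / 2) (y := b + a / 2 + 1)
    (z := a + b + 1) (w := b + 1 / 2) (by positivity) (by positivity) (by ring)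
  have hsum := (tendsto_tsum_hypTerm_atTop ha).comp
    (tendsto_atTop_add_const_left atTop b tendsto_natCast_atTop_atTop)
  have hconst := (hratio.mul hsum).congr fun n => (tsum_hypTerm_eq_mul_tsum_add ha hb n).symm
  rw [mul_comm, ← tendsto_nhds_unique tendsto_const_nhds hconst]
  exact (summable_hypTerm ha hb).hasSum

end Series

section GammaValues

theorem Gamma_one_sixth :
    Real.Gamma (1 / 6) = 2 ^ (-1 / 3 : ℝ) * √3 / √Real.pi * Real.Gamma (1 / 3) ^ 2 := by
  have hdup : Real.Gamma (1 / 6) * Real.Gamma (2 / 3) =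
      Real.Gamma (1 / 3) * 2 ^ (2 / 3 : ℝ) * √Real.pi := by
    convert Real.Gamma_mul_Gamma_add_half (1 / 6) using 4 <;> norm_num
  have hrefl : Real.Gamma (1 / 3) * Real.Gamma (2 / 3) = Real.pi / (√3 / 2) := by
    convert Real.Gamma_mul_Gamma_one_sub (1 / 3) using 2
    · norm_num
    · rw [mul_one_div, Real.sin_pi_div_three]
  have hpow : (2 : ℝ) ^ (2 / 3 : ℝ) = 2 ^ (-1 / 3 : ℝ) * 2 := by
    rw [← Real.rpow_add_one two_ne_zero]
    norm_num
  have hΓ : Real.Gamma (2 / 3) ≠ 0 := (Real.Gamma_pos_of_pos (by norm_num)).ne'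
  have hsqrt : √Real.pi ^ 2 = Real.pi := Real.sq_sqrt Real.pi_nonneg
  apply mul_right_cancel₀ hΓ
  calc Real.Gamma (1 / 6) * Real.Gamma (2 / 3)
      = 2 ^ (-1 / 3 : ℝ) * √3 / √Real.pi * Real.Gamma (1 / 3) * (√Real.pi ^ 2 / (√3 / 2)) := by
        rw [hdup, hpow]
        field
    _ = 2 ^ (-1 / 3 : ℝ) * √3 / √Real.pi * Real.Gamma (1 / 3) ^ 2 * Real.Gamma (2 / 3) := by
        rw [hsqrt, ← hrefl]
        ring

theorem Gamma_nineteen_sixths : Real.Gamma (19 / 6) = 91 / 216 * Real.Gamma (1 / 6) := by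
  rw [show (19 / 6 : ℝ) = 1 / 6 + 1 + 1 + 1 by norm_num, Real.Gamma_add_one (by norm_num),
    Real.Gamma_add_one (by norm_num), Real.Gamma_add_one (by norm_num)]
  ring

theorem Gamma_seven_thirds_mul_Gamma_four_thirds :
    Real.Gamma (7 / 3) * Real.Gamma (4 / 3) = 4 / 27 * Real.Gamma (1 / 3) ^ 2 := by
  rw [show (7 / 3 : ℝ) = 1 / 3 + 1 + 1 by norm_num, show (4 / 3 : ℝ) = 1 / 3 + 1 by norm_num,
    Real.Gamma_add_one (by norm_num), Real.Gamma_add_one (by norm_num)]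
  ring

theorem Gamma_quotient_eq :
    2 ^ (1 / 2 : ℝ) * (Real.Gamma (19 / 12) * Real.Gamma (25 / 12) /
      (Real.Gamma (7 / 3) * Real.Gamma (4 / 3))) = 91 * √3 / 128 := by
  have hdup : Real.Gamma (19 / 12) * Real.Gamma (25 / 12) =
      Real.Gamma (19 / 6) * 2 ^ (-(13 / 6) : ℝ) * √Real.pi := by
    convert Real.Gamma_mul_Gamma_add_half (19 / 12) using 4 <;> norm_num
  have hpow : (2 : ℝ) ^ (1 / 2 : ℝ) * 2 ^ (-(13 / 6) : ℝ) * 2 ^ (-1 / 3 : ℝ) = 1 / 4 := by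
    rw [← Real.rpow_add two_pos, ← Real.rpow_add two_pos]
    norm_num
  have hΓ : Real.Gamma (1 / 3) ≠ 0 := (Real.Gamma_pos_of_pos (by norm_num)).ne'
  calc 2 ^ (1 / 2 : ℝ) * (Real.Gamma (19 / 12) * Real.Gamma (25 / 12) /
        (Real.Gamma (7 / 3) * Real.Gamma (4 / 3)))
      = 2 ^ (1 / 2 : ℝ) * 2 ^ (-(13 / 6) : ℝ) * 2 ^ (-1 / 3 : ℝ) * (91 * √3 / 32) := by
        rw [hdup, Gamma_nineteen_sixths, Gamma_one_sixth, Gamma_seven_thirds_mul_Gamma_four_thirds]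
        field_simp
        norm_num
    _ = 91 * √3 / 128 := by
        rw [hpow]
        ring

end GammaValues

theorem stmt_3 :
    91 * Real.sqrt 3 / 16 =
      ∑' k : ℕ, (1/4 : ℝ) ^ k * (risingFactorial (1/2) k * risingFactorial (4/3) k * risingFactorial (5/3) k) /
        (risingFactorial (1) k * risingFactorial (19/12) k * risingFactorial (25/12) k) * (9 * (k:ℝ) + 8) := by
  have hsum : HasSum (hypTerm (1 / 2) (5 / 6)) (91 * √3 / 128) := by
    convert hasSum_hypTerm (a := 1 / 2) (b := 5 / 6) (by norm_num) (by norm_num) using 1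
    rw [← Gamma_quotient_eq]
    norm_num
  calc 91 * √3 / 16
      = 8 * (91 * √3 / 128) := by ring
    _ = ∑' k, 8 * hypTerm (1 / 2) (5 / 6) k := (hsum.mul_left 8).tsum_eq.symm
    _ = _ := tsum_congr fun k => by
      rw [hypTerm, hypCoeff]
      norm_num only
      ring
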